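/- Let {x_i}_{i=1}^n ⊂ ℝ³ be points that are all coplanar, i.e., the centered vectors x_i − x_1 span a subspace of dimension strictly less than 3, and let {y_i}_{i=1}^n ⊂ ℝ³ satisfy ‖x_i − x_j‖ = ‖y_i − y_j‖ for all i, j. Then there exists a rotation matrix R ∈ SO(3) and t ∈ ℝ³ with y_i = R x_i + t for all i. -/

import Mathlib

open Matrix

/-!
Distances between the points determine, by polarization, the Gram matrix of the difference vectors
from a base point. Two families with the same Gram matrix are related by a linear isometry on the
span of the first one, which extends to the whole space. If this extension reverses orientation,
precompose it with a reflection in a hyperplane containing the span; such a hyperplane exists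
because the points do not affinely span the space.
-/

open Module

section RCLike

variable {𝕜 : Type*} [RCLike 𝕜]

theorem exists_linearIsometry_range_of_norm_eq {M E F : Type*} [AddCommGroup M] [Module 𝕜 M]
    [SeminormedAddCommGroup E] [NormedSpace 𝕜 E] [NormedAddCommGroup F] [NormedSpace 𝕜 F]
    (f : M →ₗ[𝕜] E) (g : M →ₗ[𝕜] F) (h : ∀ m, ‖f m‖ = ‖g m‖) :
    ∃ L : f.range →ₗᵢ[𝕜] F, ∀ m, L ⟨f m, f.mem_range_self m⟩ = g m := by
  have hL (m : M) : g.compLeftInverse f ⟨f m, f.mem_range_self m⟩ = g m :=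
    LinearMap.compLeftInverse_apply_of_bdd _ _ ⟨1, fun m ↦ by rw [one_mul, h]⟩ m _ rfl
  refine ⟨⟨g.compLeftInverse f, ?_⟩, hL⟩
  rintro ⟨_, m, rfl⟩
  exact (congrArg norm (hL m)).trans (h m).symm

section Gram

variable {ι E F : Type*} [SeminormedAddCommGroup E] [InnerProductSpace 𝕜 E]

theorem norm_linearCombination_eq_of_gram_eq [SeminormedAddCommGroup F] [InnerProductSpace 𝕜 F]
    {u : ι → E} {v : ι → F} (h : gram 𝕜 u = gram 𝕜 v) (c : ι →₀ 𝕜) :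
    ‖Finsupp.linearCombination 𝕜 u c‖ = ‖Finsupp.linearCombination 𝕜 v c‖ := by
  have h_inner (i j : ι) : inner 𝕜 (u i) (u j) = inner 𝕜 (v i) (v j) := congr_fun₂ h i j
  simp only [norm_eq_sqrt_re_inner (𝕜 := 𝕜), Finsupp.linearCombination_apply, Finsupp.sum,
    sum_inner, inner_sum, inner_smul_left, inner_smul_right, h_inner]

theorem exists_linearIsometry_span_of_gram_eq [NormedAddCommGroup F] [InnerProductSpace 𝕜 F]
    {u : ι → E} {v : ι → F} (h : gram 𝕜 u = gram 𝕜 v) :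
    ∃ L : Submodule.span 𝕜 (Set.range u) →ₗᵢ[𝕜] F,
      ∀ i, L ⟨u i, Submodule.subset_span (Set.mem_range_self i)⟩ = v i := by
  have hspan : Submodule.span 𝕜 (Set.range u) = (Finsupp.linearCombination 𝕜 u).range :=
    (Finsupp.range_linearCombination 𝕜).symm
  obtain ⟨L, hL⟩ := exists_linearIsometry_range_of_norm_eq _ _
    (norm_linearCombination_eq_of_gram_eq h)
  refine ⟨L.comp (LinearIsometryEquiv.ofEq _ _ hspan).toLinearIsometry, fun i ↦ ?_⟩
  simpa using! hL (Finsupp.single i 1)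

end Gram

theorem gram_vsub_eq_of_congruent {ι V W P Q : Type*}
    [SeminormedAddCommGroup V] [InnerProductSpace ℝ V] [PseudoMetricSpace P] [NormedAddTorsor V P]
    [SeminormedAddCommGroup W] [InnerProductSpace ℝ W] [PseudoMetricSpace Q] [NormedAddTorsor W Q]
    {x : ι → P} {y : ι → Q} (h : Congruent x y) (i₀ : ι) :
    gram ℝ (fun i ↦ x i -ᵥ x i₀) = gram ℝ (fun i ↦ y i -ᵥ y i₀) := by
  ext i j
  simp only [gram_apply,
    real_inner_eq_norm_mul_self_add_norm_mul_self_sub_norm_sub_mul_self_div_two,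
    vsub_sub_vsub_cancel_right, ← dist_eq_norm_vsub, congruent_iff_dist_eq.1 h]

theorem exists_linearIsometryEquiv_det_eq_neg_one_fixing {V : Type*} [NormedAddCommGroup V]
    [InnerProductSpace 𝕜 V] [FiniteDimensional 𝕜 V] {S : Submodule 𝕜 V} (hS : S ≠ ⊤) :
    ∃ ρ : V ≃ₗᵢ[𝕜] V, LinearMap.det ρ.toLinearMap = -1 ∧ ∀ s ∈ S, ρ s = s := by
  obtain ⟨w, hwS, hw⟩ :=
    Submodule.exists_mem_ne_zero_of_ne_bot (mt Submodule.orthogonal_eq_bot_iff.1 hS)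
  refine ⟨(Submodule.span 𝕜 {w})ᗮ.reflection, ?_, fun s hs ↦ ?_⟩
  · rw [Submodule.det_reflection, Submodule.orthogonal_orthogonal, finrank_span_singleton hw,
      pow_one]
  · apply Submodule.reflection_mem_subspace_eq_self
    rw [Submodule.mem_orthogonal_singleton_iff_inner_right]
    exact Submodule.inner_left_of_mem_orthogonal hs hwS

theorem toEuclideanLin_symm_mem_specialUnitaryGroup {m : Type*} [Fintype m] [DecidableEq m]
    (φ : EuclideanSpace 𝕜 m ≃ₗᵢ[𝕜] EuclideanSpace 𝕜 m)
    (hφ : LinearMap.det φ.toLinearMap = 1) :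
    toEuclideanLin.symm φ.toLinearMap ∈ specialUnitaryGroup m 𝕜 := by
  let b := EuclideanSpace.basisFun m 𝕜
  exact mem_specialUnitaryGroup_iff.2
    ⟨φ.toMatrix_mem_unitaryGroup b b, (LinearMap.det_toMatrix b.toBasis _).trans hφ⟩

end RCLike

section Real

variable {V : Type*} [NormedAddCommGroup V] [InnerProductSpace ℝ V] [FiniteDimensional ℝ V]

theorem det_linearIsometryEquiv_eq_one_or_neg_one (φ : V ≃ₗᵢ[ℝ] V) :
    LinearMap.det φ.toLinearMap = 1 ∨ LinearMap.det φ.toLinearMap = -1 := by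
  rw [← abs_eq zero_le_one, ← LinearMap.normDet_eq_abs_det]
  exact φ.toLinearIsometry.normDet_eq_one

theorem exists_linearIsometryEquiv_det_eq_one_extending {S : Submodule ℝ V} (hS : S ≠ ⊤)
    (L : S →ₗᵢ[ℝ] V) :
    ∃ φ : V ≃ₗᵢ[ℝ] V, LinearMap.det φ.toLinearMap = 1 ∧ ∀ s : S, φ s = L s := by
  let ψ : V ≃ₗᵢ[ℝ] V := L.extend.toLinearIsometryEquiv rfl
  have hψ (s : S) : ψ s = L s := L.extend_apply s
  rcases det_linearIsometryEquiv_eq_one_or_neg_one ψ with hdet | hdet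
  · exact ⟨ψ, hdet, hψ⟩
  · obtain ⟨ρ, hρ, hρS⟩ := exists_linearIsometryEquiv_det_eq_neg_one_fixing hS
    refine ⟨ρ.trans ψ, ?_, fun s ↦ ?_⟩
    · calc LinearMap.det (ρ.trans ψ).toLinearMap
          = LinearMap.det ψ.toLinearMap * LinearMap.det ρ.toLinearMap := LinearMap.det_comp _ _
        _ = 1 := by rw [hdet, hρ, neg_one_mul, neg_neg]
    · rw [LinearIsometryEquiv.trans_apply, hρS s s.2, hψ]

theorem exists_affineIsometryEquiv_det_eq_one_of_congruent {ι P : Type*} [PseudoMetricSpace P]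
    [NormedAddTorsor V P] {x y : ι → P} (hx : vectorSpan ℝ (Set.range x) ≠ ⊤) (h : Congruent x y) :
    ∃ f : P ≃ᵃⁱ[ℝ] P, LinearMap.det f.linearIsometryEquiv.toLinearMap = 1 ∧
      ∀ i, f (x i) = y i := by
  rcases isEmpty_or_nonempty ι with _ | ⟨⟨i₀⟩⟩
  · exact ⟨.refl ℝ P, LinearMap.det_id, isEmptyElim⟩
  rw [vectorSpan_range_eq_span_range_vsub_right ℝ x i₀] at hx
  obtain ⟨L, hL⟩ := exists_linearIsometry_span_of_gram_eq (gram_vsub_eq_of_congruent h i₀)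
  obtain ⟨φ, hdet, hφ⟩ := exists_linearIsometryEquiv_det_eq_one_extending hx L
  refine ⟨.mk' (fun p ↦ φ (p -ᵥ x i₀) +ᵥ y i₀) φ (x i₀) (by simp), ?_, fun i ↦ ?_⟩
  · rwa [AffineIsometryEquiv.linearIsometryEquiv_mk']
  · rw [AffineIsometryEquiv.coe_mk', ← vsub_vadd (y i) (y i₀), ← hL i]
    exact congrArg (· +ᵥ y i₀) (hφ ⟨x i -ᵥ x i₀, _⟩)

end Real

theorem coplanar_points_with_equal_distances_admit_rotation_general
    {ι m : Type*} [Fintype m] [DecidableEq m] (x y : ι → EuclideanSpace ℝ m)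
    (hx : finrank ℝ (vectorSpan ℝ (Set.range x)) < Fintype.card m)
    (hdist : ∀ i j, ‖x i - x j‖ = ‖y i - y j‖) :
    ∃ (R : Matrix m m ℝ) (t : EuclideanSpace ℝ m),
      Rᵀ * R = 1 ∧ R.det = 1 ∧ ∀ i, y i = toEuclideanLin R (x i) + t := by
  have hx_top : vectorSpan ℝ (Set.range x) ≠ ⊤ := by
    intro htop
    rw [htop, finrank_top, finrank_euclideanSpace] at hx
    exact hx.false
  have hcong : Congruent x y := congruent_iff_dist_eq.2 <| by simpa only [dist_eq_norm] using hdist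
  obtain ⟨f, hdet, hf⟩ := exists_affineIsometryEquiv_det_eq_one_of_congruent hx_top hcong
  obtain ⟨hR, hR_det⟩ := mem_specialUnitaryGroup_iff.1
    (toEuclideanLin_symm_mem_specialUnitaryGroup f.linearIsometryEquiv hdet)
  refine ⟨_, f 0, (mem_orthogonalGroup_iff' m ℝ).1 hR, hR_det, fun i ↦ ?_⟩
  rw [LinearEquiv.apply_symm_apply, ← hf i]
  simpa using! f.map_vadd 0 (x i)

theorem coplanar_points_with_equal_distances_admit_rotation
    (n : ℕ) (x y : Fin (n + 1) → EuclideanSpace ℝ (Fin 3))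
    (hcoplanar :
      Module.finrank ℝ (Submodule.span ℝ (Set.range fun i => x i - x 0)) < 3)
    (hdist : ∀ i j : Fin (n + 1), ‖x i - x j‖ = ‖y i - y j‖) :
    ∃ (R : Matrix (Fin 3) (Fin 3) ℝ) (t : EuclideanSpace ℝ (Fin 3)),
      Rᵀ * R = 1 ∧ R.det = 1 ∧
        ∀ i : Fin (n + 1), y i = Matrix.toEuclideanLin R (x i) + t := by
  apply coplanar_points_with_equal_distances_admit_rotation_general x y _ hdist
  rwa [vectorSpan_range_eq_span_range_vsub_right ℝ x 0, Fintype.card_fin]
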